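/- Correctness of Memo-at (Theorem 6): For every at-NFA A = (P, Q, q0, F, T), every input string w over Σ, and every position i ∈ {0, …, |w|}, Match-(la,at)_{A,w}(q0, i) = f(Memo-at^{M0}_{A,A,w}(q0, i)), where f converts results of Memo-at to results of Match-(la,at) by f(Failure(j)) = Failure and f(SuccessAt(i', K)) = SuccessAt(i'). -/

import Mathlib

namespace RegexMemo

/-! ## Generic runs, `φ`, `sub`, `sub*` -/

variable {α : Type}

/-- `φ_s(ℓ, n)`: the index of the result value of the call at index `ℓ`. -/
def phiAux (isRet : α → Bool) (s : List α) (ℓ n : ℕ) : Option ℕ :=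
  match h : s[ℓ]? with
  | none => none
  | some e =>
    if isRet e then
      if n ≤ 1 then some ℓ
      else phiAux isRet s (ℓ + 1) (n - 1)
    else phiAux isRet s (ℓ + 1) (n + 1)
termination_by s.length - ℓ
decreasing_by
  all_goals
    have hl : ℓ < s.length := by
      by_contra hc
      have : s[ℓ]? = none := List.getElem?_eq_none (by omega)
      simp [this] at h
    omega

/-- `φ_s(ℓ) = φ_s(ℓ, 0)`. -/
def phi (isRet : α → Bool) (s : List α) (ℓ : ℕ) : Option ℕ := phiAux isRet s ℓ 0

/-- `sub(s, ℓ)`: replace the memoization-table invocation at index `ℓ` (an element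
`M(q,i)` together with its immediately following result) by `C(q,i)` followed by the
subsequence `s[ℓ'+1] … s[φ_s(ℓ')]`, where `ℓ'` is the first index with `s[ℓ'] = C(q,i)`.
Here `m2c` maps a memoization element `M(q,i)` to the corresponding call element `C(q,i)`
(and everything else to `none`), and `isRet` recognizes result elements. -/
def subExpand [DecidableEq α] (m2c : α → Option α) (isRet : α → Bool)
    (s : List α) (ℓ : ℕ) : Option (List α) :=
  match s[ℓ]? with
  | some e =>
    match m2c e with
    | some c =>
      match s.findIdx? (· == c) with
      | some ℓ' =>
        match phi isRet s ℓ' with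
        | some m =>
          some (s.take ℓ ++ [c] ++ ((s.drop (ℓ' + 1)).take (m - ℓ')) ++ s.drop (ℓ + 2))
        | none => none
      | none => none
    | none => none
  | none => none

/-- `sub*`: repeatedly locate the first memoization element and expand it,
until no memoization element remains. `SubStar m2c isRet s t` means `sub*(s) = t`. -/
inductive SubStar [DecidableEq α] (m2c : α → Option α) (isRet : α → Bool) :
    List α → List α → Prop where
  | done {s : List α} : s.findIdx? (fun e => (m2c e).isSome) = none →
      SubStar m2c isRet s s
  | step {s s' t : List α} {ℓ : ℕ} :
      s.findIdx? (fun e => (m2c e).isSome) = some ℓ →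
      subExpand m2c isRet s ℓ = some s' →
      SubStar m2c isRet s' t →
      SubStar m2c isRet s t

/-- The number of (recursive) calls recorded in a run: the number of `C`/`M` elements. -/
def callCount (isCall : α → Bool) (s : List α) : ℕ := (s.filter isCall).length

variable {Sigma S : Type}

/-- Results of backtracking matching: `SuccessAt i'` or `Failure`. -/
inductive Result : Type where
  | successAt : ℕ → Result
  | failure : Result
deriving DecidableEq

/-! ## Plain NFAs -/

/-- Transitions of a plain NFA. -/
inductive Trans (Sigma S : Type) : Type where
  | eps : S → Trans Sigma S
  | branch : S → S → Trans Sigma S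
  | char : Sigma → S → Trans Sigma S

/-- A (plain) NFA over the alphabet `Sigma` with (finite) state type `S`:
an initial state, a set of accepting states, and a transition function
(whose value is only relevant on non-accepting states). -/
structure NFA (Sigma S : Type) where
  q0 : S
  F : Set S
  T : S → Trans Sigma S

/-- One ε-step: an `Eps` or `Branch` transition of a non-accepting state. -/
def NFA.epsStep (A : NFA Sigma S) (q q' : S) : Prop :=
  q ∉ A.F ∧ (A.T q = Trans.eps q' ∨ (∃ q'', A.T q = Trans.branch q' q'') ∨
    (∃ q'', A.T q = Trans.branch q'' q'))

/-- The NFA has no ε-loops. -/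
def NFA.NoEpsLoops (A : NFA Sigma S) : Prop :=
  ∀ q : S, ¬ Relation.TransGen A.epsStep q q

open Classical in
/-- The in-degree `#in(q)` of a state of a plain NFA. -/
noncomputable def NFA.inDeg [Fintype S] (A : NFA Sigma S) (q : S) : ℕ :=
  (Finset.univ.filter fun q' : S => q' ∉ A.F ∧ A.T q' = Trans.eps q).card +
  (Finset.univ.filter fun q' : S => q' ∉ A.F ∧ ∃ σ, A.T q' = Trans.char σ q).card +
  (Finset.univ.filter fun q' : S => q' ∉ A.F ∧ ∃ q'', A.T q' = Trans.branch q q'').card +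
  (Finset.univ.filter fun q' : S => q' ∉ A.F ∧ ∃ q'', A.T q' = Trans.branch q'' q).card +
  (if q = A.q0 then 1 else 0)

/-- The maximal in-degree `#in(A)` of a plain NFA. -/
noncomputable def NFA.inDegMax [Fintype S] (A : NFA Sigma S) : ℕ :=
  Finset.univ.sup fun q : S => A.inDeg q

/-- Elements of runs of `Match`/`Memo`: calls `C(q,i)`, memoization-table invocations
`M(q,i)`, and results `S(i')` and `F`. -/
inductive RunElem (S : Type) : Type where
  | call : S → ℕ → RunElem S
  | memo : S → ℕ → RunElem S
  | succ : ℕ → RunElem S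
  | fail : RunElem S
deriving DecidableEq

/-- The run element recording the return of a result. -/
def Result.elem {S : Type} : Result → RunElem S
  | .successAt i => .succ i
  | .failure => .fail

def RunElem.isRet : RunElem S → Bool
  | .succ _ => true
  | .fail => true
  | _ => false

def RunElem.isCall : RunElem S → Bool
  | .call _ _ => true
  | .memo _ _ => true
  | _ => false

/-- `M(q,i) ↦ C(q,i)`. -/
def memoToCall : RunElem S → Option (RunElem S)
  | .memo q i => some (.call q i)
  | _ => none

/-- Big-step semantics (together with the produced run) of the backtracking
matching algorithm `Match` for plain NFAs:
`MatchRun A w q i r s` means the call `Match_{A,w}(q, i)` terminates with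
result `r` and produces the run `s`. -/
inductive MatchRun (A : NFA Sigma S) (w : List Sigma) :
    S → ℕ → Result → List (RunElem S) → Prop where
  | accept {q : S} {i : ℕ} : q ∈ A.F →
      MatchRun A w q i (.successAt i) [.call q i, .succ i]
  | eps {q q' : S} {i : ℕ} {r : Result} {s : List (RunElem S)} :
      q ∉ A.F → A.T q = Trans.eps q' →
      MatchRun A w q' i r s →
      MatchRun A w q i r (.call q i :: s ++ [r.elem])
  | branchSucc {q q' q'' : S} {i i' : ℕ} {s : List (RunElem S)} :
      q ∉ A.F → A.T q = Trans.branch q' q'' →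
      MatchRun A w q' i (.successAt i') s →
      MatchRun A w q i (.successAt i') (.call q i :: s ++ [RunElem.succ i'])
  | branchFail {q q' q'' : S} {i : ℕ} {r : Result} {s s' : List (RunElem S)} :
      q ∉ A.F → A.T q = Trans.branch q' q'' →
      MatchRun A w q' i .failure s →
      MatchRun A w q'' i r s' →
      MatchRun A w q i r (.call q i :: s ++ s' ++ [r.elem])
  | charSucc {q q' : S} {σ : Sigma} {i : ℕ} {r : Result} {s : List (RunElem S)} :
      q ∉ A.F → A.T q = Trans.char σ q' →
      w[i]? = some σ →
      MatchRun A w q' (i + 1) r s →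
      MatchRun A w q i r (.call q i :: s ++ [r.elem])
  | charFail {q q' : S} {σ : Sigma} {i : ℕ} :
      q ∉ A.F → A.T q = Trans.char σ q' →
      w[i]? ≠ some σ →
      MatchRun A w q i .failure [.call q i, .fail]

/-- Record `M(q,i) := Failure` in the memoization table if the result is a failure. -/
def recFail [DecidableEq S] (M : S × ℕ → Bool) (q : S) (i : ℕ) : Result → (S × ℕ → Bool)
  | .failure => fun p => if p = (q, i) then true else M p
  | _ => M

/-- Big-step semantics (with resulting memoization table and produced run) of the
memoized backtracking matching algorithm `Memo` for plain NFAs: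
`MemoRun A w q i M M' r s` means the call `Memo^M_{A,w}(q, i)` terminates with result
`r`, final memoization table `M'` (where `M p = true` means `Failure` is recorded at the
key `p`), and produces the run `s`. -/
inductive MemoRun [DecidableEq S] (A : NFA Sigma S) (w : List Sigma) :
    S → ℕ → (S × ℕ → Bool) → (S × ℕ → Bool) → Result → List (RunElem S) → Prop where
  | memoHit {q : S} {i : ℕ} {M : S × ℕ → Bool} : M (q, i) = true →
      MemoRun A w q i M M .failure [.memo q i, .fail]
  | accept {q : S} {i : ℕ} {M : S × ℕ → Bool} : M (q, i) = false → q ∈ A.F →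
      MemoRun A w q i M M (.successAt i) [.call q i, .succ i]
  | eps {q q' : S} {i : ℕ} {M M' : S × ℕ → Bool} {r : Result} {s : List (RunElem S)} :
      M (q, i) = false → q ∉ A.F → A.T q = Trans.eps q' →
      MemoRun A w q' i M M' r s →
      MemoRun A w q i M (recFail M' q i r) r (.call q i :: s ++ [r.elem])
  | branchSucc {q q' q'' : S} {i i' : ℕ} {M M' : S × ℕ → Bool} {s : List (RunElem S)} :
      M (q, i) = false → q ∉ A.F → A.T q = Trans.branch q' q'' →
      MemoRun A w q' i M M' (.successAt i') s →
      MemoRun A w q i M M' (.successAt i') (.call q i :: s ++ [RunElem.succ i'])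
  | branchFail {q q' q'' : S} {i : ℕ} {M M' M'' : S × ℕ → Bool} {r : Result}
      {s s' : List (RunElem S)} :
      M (q, i) = false → q ∉ A.F → A.T q = Trans.branch q' q'' →
      MemoRun A w q' i M M' .failure s →
      MemoRun A w q'' i M' M'' r s' →
      MemoRun A w q i M (recFail M'' q i r) r (.call q i :: s ++ s' ++ [r.elem])
  | charSucc {q q' : S} {σ : Sigma} {i : ℕ} {M M' : S × ℕ → Bool} {r : Result}
      {s : List (RunElem S)} :
      M (q, i) = false → q ∉ A.F → A.T q = Trans.char σ q' →
      w[i]? = some σ →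
      MemoRun A w q' (i + 1) M M' r s →
      MemoRun A w q i M (recFail M' q i r) r (.call q i :: s ++ [r.elem])
  | charFail {q q' : S} {σ : Sigma} {i : ℕ} {M : S × ℕ → Bool} :
      M (q, i) = false → q ∉ A.F → A.T q = Trans.char σ q' →
      w[i]? ≠ some σ →
      MemoRun A w q i M (recFail M q i .failure) .failure [.call q i, .fail]

/-! ## NFAs with sub-automata -/

/-- Kind labels of sub-automaton transitions: positive/negative look-ahead/look-behind
and atomic grouping. -/
inductive Kind : Type where
  | pla | nla | plb | nlb | at
deriving DecidableEq

mutual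
/-- An NFA with sub-automata `⟨Q, q0, F, T⟩`: a list of top-level states, an initial
state, accepting states, and a transition function (relevant on non-accepting top-level
states) whose transitions may be labelled with further NFAs with sub-automata. -/
inductive SubNFA (Sigma S : Type) : Type where
  | mk : List S → S → List S → (S → SubTrans Sigma S) → SubNFA Sigma S

/-- Transitions of an NFA with sub-automata. -/
inductive SubTrans (Sigma S : Type) : Type where
  | eps : S → SubTrans Sigma S
  | branch : S → S → SubTrans Sigma S
  | char : Sigma → S → SubTrans Sigma S
  | sub : Kind → SubNFA Sigma S → S → SubTrans Sigma S
end

/-- Top-level states `Q`. -/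
def SubNFA.Q : SubNFA Sigma S → List S
  | .mk Q _ _ _ => Q

/-- Initial state `q0`. -/
def SubNFA.q0 : SubNFA Sigma S → S
  | .mk _ q0 _ _ => q0

/-- Accepting states `F`. -/
def SubNFA.F : SubNFA Sigma S → List S
  | .mk _ _ F _ => F

/-- Transition function `T`. -/
def SubNFA.T : SubNFA Sigma S → S → SubTrans Sigma S
  | .mk _ _ _ T => T

mutual
/-- All automata occurring within an NFA with sub-automata (including itself), each
together with its nesting depth of atomic grouping (the number of enclosing
`at`-sub-automaton boundaries). -/
def SubNFA.compsD : SubNFA Sigma S → List (SubNFA Sigma S × ℕ)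
  | .mk Q q0 F T => (.mk Q q0 F T, 0) :: Q.flatMap (fun q => SubTrans.subCompsD (T q))

def SubTrans.subCompsD : SubTrans Sigma S → List (SubNFA Sigma S × ℕ)
  | .sub k A' _ => (SubNFA.compsD A').map (fun p => (p.1, p.2 + (if k = Kind.at then 1 else 0)))
  | _ => []
end

/-- All automata occurring within `A` (including `A` itself). -/
def SubNFA.comps (A : SubNFA Sigma S) : List (SubNFA Sigma S) :=
  A.compsD.map Prod.fst

/-- The set (list) of all states `P` occurring within `A`. -/
def SubNFA.allStates (A : SubNFA Sigma S) : List S :=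
  A.comps.flatMap SubNFA.Q

/-- The nesting depth of atomic grouping `ν_A(q)` of a state `q` of `A`. -/
def SubNFA.nu [DecidableEq S] (A : SubNFA Sigma S) (q : S) : ℕ :=
  (A.compsD.map (fun p => if q ∈ p.1.Q then p.2 else 0)).sum

/-- The maximal nesting depth of atomic grouping `ν(A)`. -/
def SubNFA.nuMax [DecidableEq S] (A : SubNFA Sigma S) : ℕ :=
  (A.allStates.map A.nu).foldr max 0

/-- Local wellformedness of one automaton: the initial state is a top-level state,
accepting states are top-level states, and transitions of non-accepting top-level
states lead to top-level states. -/
def SubNFA.LocalOK (B : SubNFA Sigma S) : Prop :=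
  B.q0 ∈ B.Q ∧ (∀ f ∈ B.F, f ∈ B.Q) ∧ ∀ q ∈ B.Q, q ∉ B.F →
    match B.T q with
    | .eps q' => q' ∈ B.Q
    | .branch q' q'' => q' ∈ B.Q ∧ q'' ∈ B.Q
    | .char _ q' => q' ∈ B.Q
    | .sub _ _ q' => q' ∈ B.Q

/-- Wellformedness of an NFA with sub-automata: every component automaton is locally
wellformed, and all the state lists are disjoint and duplicate-free (so that `P` is
the disjoint union of the top-level state sets of all components). -/
def SubNFA.WF (A : SubNFA Sigma S) : Prop :=
  (∀ B ∈ A.comps, B.LocalOK) ∧ A.allStates.Nodup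

/-- The kind labels of all sub-automaton transitions occurring in `A`. -/
def SubNFA.kinds [DecidableEq S] (A : SubNFA Sigma S) : List Kind :=
  A.comps.flatMap fun B =>
    (B.Q.filter (fun q => decide (q ∉ B.F))).filterMap fun q =>
      match B.T q with
      | .sub k _ _ => some k
      | _ => none

/-- A la-NFA: all kind labels are look-around labels (for simplicity, only positive
look-ahead `pla` is treated). -/
def SubNFA.IsLaNFA [DecidableEq S] (A : SubNFA Sigma S) : Prop :=
  ∀ k ∈ A.kinds, k = Kind.pla

/-- An at-NFA: all kind labels are `at` (atomic grouping). -/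
def SubNFA.IsAtNFA [DecidableEq S] (A : SubNFA Sigma S) : Prop :=
  ∀ k ∈ A.kinds, k = Kind.at

/-- A (la,at)-NFA in which (for simplicity) only the kinds `pla` and `at` occur. -/
def SubNFA.IsLaAtNFA [DecidableEq S] (A : SubNFA Sigma S) : Prop :=
  ∀ k ∈ A.kinds, k = Kind.pla ∨ k = Kind.at

/-- One global ε-step of an NFA with sub-automata: an `Eps` or `Branch` transition, or a
`Sub` transition with a look-around kind (from the transition's source to its successor),
of a non-accepting top-level state of any component automaton. -/
def SubNFA.epsStep (A : SubNFA Sigma S) (q q' : S) : Prop :=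
  ∃ B ∈ A.comps, q ∈ B.Q ∧ q ∉ B.F ∧
    (B.T q = SubTrans.eps q' ∨
     (∃ q'', B.T q = SubTrans.branch q' q'') ∨
     (∃ q'', B.T q = SubTrans.branch q'' q') ∨
     (∃ k A'', B.T q = SubTrans.sub k A'' q' ∧ k ≠ Kind.at))

/-- The NFA with sub-automata has no ε-loops. -/
def SubNFA.NoEpsLoops (A : SubNFA Sigma S) : Prop :=
  ∀ q : S, ¬ Relation.TransGen A.epsStep q q

/-- All pairs (state, transition) of non-accepting top-level states of all component
automata of `A`. -/
def SubNFA.allTransNF [DecidableEq S] (A : SubNFA Sigma S) : List (S × SubTrans Sigma S) :=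
  A.comps.flatMap fun B => (B.Q.filter (fun q => decide (q ∉ B.F))).map fun q => (q, B.T q)

/-- How many of the buckets in the definition of the in-degree of `q` a given
transition contributes to. -/
def SubTrans.hits [DecidableEq S] (t : SubTrans Sigma S) (q : S) : ℕ :=
  match t with
  | .eps q' => if q' = q then 1 else 0
  | .char _ q' => if q' = q then 1 else 0
  | .branch q' q'' => (if q' = q then 1 else 0) + (if q'' = q then 1 else 0)
  | .sub _ _ q' => if q' = q then 1 else 0

/-- The in-degree `#in(q)` of a state of an NFA with sub-automata. -/
def SubNFA.inDeg [DecidableEq S] (A : SubNFA Sigma S) (q : S) : ℕ :=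
  (A.allTransNF.map (fun p => p.2.hits q)).sum +
  (if q ∈ A.comps.map SubNFA.q0 then 1 else 0)

/-- The maximal in-degree `#in(A)`. -/
def SubNFA.inDegMax [DecidableEq S] (A : SubNFA Sigma S) : ℕ :=
  (A.allStates.map A.inDeg).foldr max 0

/-! ## run elements for `Memo-la` and `Match-(la,at)` -/

/-- Elements of runs of `Memo-la` (and of `Match-(la,at)`): calls `C(q,i)`,
memoization-table invocations `M(q,i)`, and the results `S(i')`, `S'` (bare success),
and `F`. -/
inductive LaRunElem (S : Type) : Type where
  | call : S → ℕ → LaRunElem S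
  | memo : S → ℕ → LaRunElem S
  | succAt : ℕ → LaRunElem S
  | succ : LaRunElem S
  | fail : LaRunElem S
deriving DecidableEq

def LaRunElem.isRet : LaRunElem S → Bool
  | .succAt _ => true
  | .succ => true
  | .fail => true
  | _ => false

def LaRunElem.isCall : LaRunElem S → Bool
  | .call _ _ => true
  | .memo _ _ => true
  | _ => false

def laMemoToCall : LaRunElem S → Option (LaRunElem S)
  | .memo q i => some (.call q i)
  | _ => none

def Result.laElem {S : Type} : Result → LaRunElem S
  | .successAt i => .succAt i
  | .failure => .fail

/-! ## The backtracking matching algorithm `Match-(la,at)` -/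

/-- Big-step semantics (with produced run) of the backtracking matching algorithm
`Match-(la,at)` for NFAs with sub-automata: `LAMatchRun w A q i r s` means the call
`Match-(la,at)_{A,w}(q, i)` terminates with result `r` and produces the run `s`.
For simplicity, only the look-around kind `pla` (besides `at`) is treated. -/
inductive LAMatchRun (w : List Sigma) :
    SubNFA Sigma S → S → ℕ → Result → List (LaRunElem S) → Prop where
  | accept {A : SubNFA Sigma S} {q : S} {i : ℕ} : q ∈ A.F →
      LAMatchRun w A q i (.successAt i) [.call q i, .succAt i]
  | eps {A : SubNFA Sigma S} {q q' : S} {i : ℕ} {r : Result} {s : List (LaRunElem S)} :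
      q ∉ A.F → A.T q = SubTrans.eps q' →
      LAMatchRun w A q' i r s →
      LAMatchRun w A q i r (.call q i :: s ++ [r.laElem])
  | branchSucc {A : SubNFA Sigma S} {q q' q'' : S} {i i' : ℕ} {s : List (LaRunElem S)} :
      q ∉ A.F → A.T q = SubTrans.branch q' q'' →
      LAMatchRun w A q' i (.successAt i') s →
      LAMatchRun w A q i (.successAt i') (.call q i :: s ++ [LaRunElem.succAt i'])
  | branchFail {A : SubNFA Sigma S} {q q' q'' : S} {i : ℕ} {r : Result}
      {s s' : List (LaRunElem S)} :
      q ∉ A.F → A.T q = SubTrans.branch q' q'' →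
      LAMatchRun w A q' i .failure s →
      LAMatchRun w A q'' i r s' →
      LAMatchRun w A q i r (.call q i :: s ++ s' ++ [r.laElem])
  | charSucc {A : SubNFA Sigma S} {q q' : S} {σ : Sigma} {i : ℕ} {r : Result}
      {s : List (LaRunElem S)} :
      q ∉ A.F → A.T q = SubTrans.char σ q' →
      w[i]? = some σ →
      LAMatchRun w A q' (i + 1) r s →
      LAMatchRun w A q i r (.call q i :: s ++ [r.laElem])
  | charFail {A : SubNFA Sigma S} {q q' : S} {σ : Sigma} {i : ℕ} :
      q ∉ A.F → A.T q = SubTrans.char σ q' →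
      w[i]? ≠ some σ →
      LAMatchRun w A q i .failure [.call q i, .fail]
  | plaSucc {A A' : SubNFA Sigma S} {q q' : S} {i i' : ℕ} {r : Result}
      {s1 s2 : List (LaRunElem S)} :
      q ∉ A.F → A.T q = SubTrans.sub Kind.pla A' q' →
      LAMatchRun w A' A'.q0 i (.successAt i') s1 →
      LAMatchRun w A q' i r s2 →
      LAMatchRun w A q i r (.call q i :: s1 ++ s2 ++ [r.laElem])
  | plaFail {A A' : SubNFA Sigma S} {q q' : S} {i : ℕ} {s1 : List (LaRunElem S)} :
      q ∉ A.F → A.T q = SubTrans.sub Kind.pla A' q' →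
      LAMatchRun w A' A'.q0 i .failure s1 →
      LAMatchRun w A q i .failure (.call q i :: s1 ++ [LaRunElem.fail])
  | atSucc {A A' : SubNFA Sigma S} {q q' : S} {i i' : ℕ} {r : Result}
      {s1 s2 : List (LaRunElem S)} :
      q ∉ A.F → A.T q = SubTrans.sub Kind.at A' q' →
      LAMatchRun w A' A'.q0 i (.successAt i') s1 →
      LAMatchRun w A q' i' r s2 →
      LAMatchRun w A q i r (.call q i :: s1 ++ s2 ++ [r.laElem])
  | atFail {A A' : SubNFA Sigma S} {q q' : S} {i : ℕ} {s1 : List (LaRunElem S)} :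
      q ∉ A.F → A.T q = SubTrans.sub Kind.at A' q' →
      LAMatchRun w A' A'.q0 i .failure s1 →
      LAMatchRun w A q i .failure (.call q i :: s1 ++ [LaRunElem.fail])

/-! ## `Memo-la` -/

/-- Values of the memoization table of `Memo-la`: `Failure` or `Success`. -/
inductive LaVal : Type where
  | success : LaVal
  | failure : LaVal
deriving DecidableEq

/-- Results of `Memo-la`: `SuccessAt i'`, bare `Success`, or `Failure`. -/
inductive LaResult : Type where
  | successAt : ℕ → LaResult
  | success : LaResult
  | failure : LaResult
deriving DecidableEq

def LaVal.toResult : LaVal → LaResult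
  | .success => .success
  | .failure => .failure

def LaResult.elem {S : Type} : LaResult → LaRunElem S
  | .successAt i => .succAt i
  | .success => .succ
  | .failure => .fail

def Result.toLa : Result → LaResult
  | .successAt i => .successAt i
  | .failure => .failure

/-- The final recording of `Memo-la`: `M(q,i) := Success` if the result is
`SuccessAt i'` or `Success`, and `M(q,i) := Failure` if the result is `Failure`. -/
def laRecord [DecidableEq S] (M : S × ℕ → Option LaVal) (q : S) (i : ℕ) (r : LaResult) :
    S × ℕ → Option LaVal :=
  fun p => if p = (q, i) then
    some (match r with | .failure => LaVal.failure | _ => LaVal.success)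
  else M p

/-- Big-step semantics (with resulting memoization table and produced run) of the
memoized backtracking matching algorithm `Memo-la` for la-NFAs:
`MemoLaRun w A q i M M' r s` means the call `Memo-la^M_{A,w}(q, i)` terminates with
result `r`, final memoization table `M'`, and produces the run `s`. The memoization
table is shared between the top-level automaton and all sub-automata. -/
inductive MemoLaRun [DecidableEq S] (w : List Sigma) :
    SubNFA Sigma S → S → ℕ → (S × ℕ → Option LaVal) → (S × ℕ → Option LaVal) →
    LaResult → List (LaRunElem S) → Prop where
  | memoHit {A : SubNFA Sigma S} {q : S} {i : ℕ} {M : S × ℕ → Option LaVal} {v : LaVal} :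
      M (q, i) = some v →
      MemoLaRun w A q i M M v.toResult [.memo q i, v.toResult.elem]
  | accept {A : SubNFA Sigma S} {q : S} {i : ℕ} {M : S × ℕ → Option LaVal} :
      M (q, i) = none → q ∈ A.F →
      MemoLaRun w A q i M (laRecord M q i (.successAt i)) (.successAt i)
        [.call q i, .succAt i]
  | eps {A : SubNFA Sigma S} {q q' : S} {i : ℕ} {M M' : S × ℕ → Option LaVal}
      {r : LaResult} {s : List (LaRunElem S)} :
      M (q, i) = none → q ∉ A.F → A.T q = SubTrans.eps q' →
      MemoLaRun w A q' i M M' r s →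
      MemoLaRun w A q i M (laRecord M' q i r) r (.call q i :: s ++ [r.elem])
  | branchNoFail {A : SubNFA Sigma S} {q q' q'' : S} {i : ℕ}
      {M M' : S × ℕ → Option LaVal} {r : LaResult} {s : List (LaRunElem S)} :
      M (q, i) = none → q ∉ A.F → A.T q = SubTrans.branch q' q'' →
      MemoLaRun w A q' i M M' r s → r ≠ .failure →
      MemoLaRun w A q i M (laRecord M' q i r) r (.call q i :: s ++ [r.elem])
  | branchFail {A : SubNFA Sigma S} {q q' q'' : S} {i : ℕ}
      {M M1 M2 : S × ℕ → Option LaVal} {r : LaResult} {s1 s2 : List (LaRunElem S)} :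
      M (q, i) = none → q ∉ A.F → A.T q = SubTrans.branch q' q'' →
      MemoLaRun w A q' i M M1 .failure s1 →
      MemoLaRun w A q'' i M1 M2 r s2 →
      MemoLaRun w A q i M (laRecord M2 q i r) r (.call q i :: s1 ++ s2 ++ [r.elem])
  | charSucc {A : SubNFA Sigma S} {q q' : S} {σ : Sigma} {i : ℕ}
      {M M' : S × ℕ → Option LaVal} {r : LaResult} {s : List (LaRunElem S)} :
      M (q, i) = none → q ∉ A.F → A.T q = SubTrans.char σ q' →
      w[i]? = some σ →
      MemoLaRun w A q' (i + 1) M M' r s →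
      MemoLaRun w A q i M (laRecord M' q i r) r (.call q i :: s ++ [r.elem])
  | charFail {A : SubNFA Sigma S} {q q' : S} {σ : Sigma} {i : ℕ}
      {M : S × ℕ → Option LaVal} :
      M (q, i) = none → q ∉ A.F → A.T q = SubTrans.char σ q' →
      w[i]? ≠ some σ →
      MemoLaRun w A q i M (laRecord M q i .failure) .failure [.call q i, .fail]
  | plaSucc {A A' : SubNFA Sigma S} {q q' : S} {i : ℕ}
      {M M1 M2 : S × ℕ → Option LaVal} {r1 r : LaResult} {s1 s2 : List (LaRunElem S)} :
      M (q, i) = none → q ∉ A.F → A.T q = SubTrans.sub Kind.pla A' q' →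
      MemoLaRun w A' A'.q0 i M M1 r1 s1 → r1 ≠ .failure →
      MemoLaRun w A q' i M1 M2 r s2 →
      MemoLaRun w A q i M (laRecord M2 q i r) r (.call q i :: s1 ++ s2 ++ [r.elem])
  | plaFail {A A' : SubNFA Sigma S} {q q' : S} {i : ℕ}
      {M M1 : S × ℕ → Option LaVal} {s1 : List (LaRunElem S)} :
      M (q, i) = none → q ∉ A.F → A.T q = SubTrans.sub Kind.pla A' q' →
      MemoLaRun w A' A'.q0 i M M1 .failure s1 →
      MemoLaRun w A q i M (laRecord M1 q i .failure) .failure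
        (.call q i :: s1 ++ [LaRunElem.fail])

/-! ## `Memo-at` -/

/-- Results of `Memo-at`: `SuccessAt(i', K)` with a set `K` of delayed memoization keys,
or `Failure(j)` with a nesting depth `j`. -/
inductive AtResult (S : Type) : Type where
  | successAt : ℕ → Finset (S × ℕ) → AtResult S
  | failure : ℕ → AtResult S

/-- Elements of runs of `Memo-at`: calls `C(q,i)`, memoization-table invocations
`M(q,i)`, and results `S(i')` and `F(j)`. -/
inductive AtRunElem (S : Type) : Type where
  | call : S → ℕ → AtRunElem S
  | memo : S → ℕ → AtRunElem S
  | succ : ℕ → AtRunElem S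
  | fail : ℕ → AtRunElem S
deriving DecidableEq

def AtRunElem.isRet : AtRunElem S → Bool
  | .succ _ => true
  | .fail _ => true
  | _ => false

def AtRunElem.isCall : AtRunElem S → Bool
  | .call _ _ => true
  | .memo _ _ => true
  | _ => false

def atMemoToCall : AtRunElem S → Option (AtRunElem S)
  | .memo q i => some (.call q i)
  | _ => none

def AtResult.elem {S : Type} : AtResult S → AtRunElem S
  | .successAt i _ => .succ i
  | .failure j => .fail j

/-- `f`, converting results of `Memo-at` to results of `Match-(la,at)`. -/
def AtResult.toResult {S : Type} : AtResult S → Result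
  | .successAt i _ => .successAt i
  | .failure _ => .failure

/-- The final step of `Memo-at`: on success, the key `(q,i)` is added to the set of
delayed keys. -/
def atFinal [DecidableEq S] (q : S) (i : ℕ) : AtResult S → AtResult S
  | .successAt i' K => .successAt i' (insert (q, i) K)
  | .failure j => .failure j

/-- The final recording of `Memo-at`: `M(q,i) := Failure(j)` if the result is
`Failure(j)`. -/
def atRecord [DecidableEq S] (M : S × ℕ → Option ℕ) (q : S) (i : ℕ) :
    AtResult S → (S × ℕ → Option ℕ)
  | .failure j => fun p => if p = (q, i) then some j else M p
  | _ => M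

/-- Batch recording `M(k) := Failure(j)` for every `k ∈ K`. -/
def atBatch [DecidableEq S] (M : S × ℕ → Option ℕ) (K : Finset (S × ℕ)) (j : ℕ) :
    S × ℕ → Option ℕ :=
  fun p => if p ∈ K then some j else M p

/-- Big-step semantics (with resulting memoization table and produced run) of the
memoized backtracking matching algorithm `Memo-at` for at-NFAs:
`MemoAtRun A0 w A q i M M' r s` means the call `Memo-at^M_{A0,A,w}(q, i)` (with the
whole automaton `A0` and current sub-automaton `A`) terminates with result `r`, final
memoization table `M'`, and produces the run `s`. -/
inductive MemoAtRun [DecidableEq S] (A0 : SubNFA Sigma S) (w : List Sigma) :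
    SubNFA Sigma S → S → ℕ → (S × ℕ → Option ℕ) → (S × ℕ → Option ℕ) →
    AtResult S → List (AtRunElem S) → Prop where
  | memoHit {A : SubNFA Sigma S} {q : S} {i j : ℕ} {M : S × ℕ → Option ℕ} :
      M (q, i) = some j →
      MemoAtRun A0 w A q i M M (.failure j) [.memo q i, .fail j]
  | accept {A : SubNFA Sigma S} {q : S} {i : ℕ} {M : S × ℕ → Option ℕ} :
      M (q, i) = none → q ∈ A.F →
      MemoAtRun A0 w A q i M M (.successAt i {(q, i)}) [.call q i, .succ i]
  | eps {A : SubNFA Sigma S} {q q' : S} {i : ℕ} {M M' : S × ℕ → Option ℕ}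
      {r : AtResult S} {s : List (AtRunElem S)} :
      M (q, i) = none → q ∉ A.F → A.T q = SubTrans.eps q' →
      MemoAtRun A0 w A q' i M M' r s →
      MemoAtRun A0 w A q i M (atRecord M' q i r) (atFinal q i r)
        (.call q i :: s ++ [r.elem])
  | branchNoBT {A : SubNFA Sigma S} {q q' q'' : S} {i : ℕ} {M M' : S × ℕ → Option ℕ}
      {r : AtResult S} {s : List (AtRunElem S)} :
      M (q, i) = none → q ∉ A.F → A.T q = SubTrans.branch q' q'' →
      MemoAtRun A0 w A q' i M M' r s →
      (∀ j, r = AtResult.failure j → j ≠ A0.nu q) →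
      MemoAtRun A0 w A q i M (atRecord M' q i r) (atFinal q i r)
        (.call q i :: s ++ [r.elem])
  | branchBTSucc {A : SubNFA Sigma S} {q q' q'' : S} {i i'' : ℕ} {K : Finset (S × ℕ)}
      {M M1 M2 : S × ℕ → Option ℕ} {s1 s2 : List (AtRunElem S)} :
      M (q, i) = none → q ∉ A.F → A.T q = SubTrans.branch q' q'' →
      MemoAtRun A0 w A q' i M M1 (.failure (A0.nu q)) s1 →
      MemoAtRun A0 w A q'' i M1 M2 (.successAt i'' K) s2 →
      MemoAtRun A0 w A q i M M2 (atFinal q i (.successAt i'' K))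
        (.call q i :: s1 ++ s2 ++ [AtRunElem.succ i''])
  | branchBTFail {A : SubNFA Sigma S} {q q' q'' : S} {i j' : ℕ}
      {M M1 M2 : S × ℕ → Option ℕ} {s1 s2 : List (AtRunElem S)} :
      M (q, i) = none → q ∉ A.F → A.T q = SubTrans.branch q' q'' →
      MemoAtRun A0 w A q' i M M1 (.failure (A0.nu q)) s1 →
      MemoAtRun A0 w A q'' i M1 M2 (.failure j') s2 →
      MemoAtRun A0 w A q i M (atRecord M2 q i (.failure (min (A0.nu q) j')))
        (.failure (min (A0.nu q) j'))
        (.call q i :: s1 ++ s2 ++ [AtRunElem.fail (min (A0.nu q) j')])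
  | charSucc {A : SubNFA Sigma S} {q q' : S} {σ : Sigma} {i : ℕ}
      {M M' : S × ℕ → Option ℕ} {r : AtResult S} {s : List (AtRunElem S)} :
      M (q, i) = none → q ∉ A.F → A.T q = SubTrans.char σ q' →
      w[i]? = some σ →
      MemoAtRun A0 w A q' (i + 1) M M' r s →
      MemoAtRun A0 w A q i M (atRecord M' q i r) (atFinal q i r)
        (.call q i :: s ++ [r.elem])
  | charFail {A : SubNFA Sigma S} {q q' : S} {σ : Sigma} {i : ℕ}
      {M : S × ℕ → Option ℕ} :
      M (q, i) = none → q ∉ A.F → A.T q = SubTrans.char σ q' →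
      w[i]? ≠ some σ →
      MemoAtRun A0 w A q i M (atRecord M q i (.failure (A0.nu q)))
        (.failure (A0.nu q)) [.call q i, .fail (A0.nu q)]
  | subSuccSucc {A A' : SubNFA Sigma S} {q q' : S} {i i' i'' : ℕ}
      {K' K'' : Finset (S × ℕ)} {M M1 M2 : S × ℕ → Option ℕ}
      {s1 s2 : List (AtRunElem S)} :
      M (q, i) = none → q ∉ A.F → A.T q = SubTrans.sub Kind.at A' q' →
      MemoAtRun A0 w A' A'.q0 i M M1 (.successAt i' K') s1 →
      MemoAtRun A0 w A q' i' M1 M2 (.successAt i'' K'') s2 →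
      MemoAtRun A0 w A q i M M2 (atFinal q i (.successAt i'' (K' ∪ K'')))
        (.call q i :: s1 ++ s2 ++ [AtRunElem.succ i''])
  | subSuccFail {A A' : SubNFA Sigma S} {q q' : S} {i i' j : ℕ} {K' : Finset (S × ℕ)}
      {M M1 M2 : S × ℕ → Option ℕ} {s1 s2 : List (AtRunElem S)} :
      M (q, i) = none → q ∉ A.F → A.T q = SubTrans.sub Kind.at A' q' →
      MemoAtRun A0 w A' A'.q0 i M M1 (.successAt i' K') s1 →
      MemoAtRun A0 w A q' i' M1 M2 (.failure j) s2 →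
      MemoAtRun A0 w A q i M (atRecord (atBatch M2 K' j) q i (.failure j)) (.failure j)
        (.call q i :: s1 ++ s2 ++ [AtRunElem.fail j])
  | subFailHigh {A A' : SubNFA Sigma S} {q q' : S} {i j : ℕ}
      {M M1 : S × ℕ → Option ℕ} {s1 : List (AtRunElem S)} :
      M (q, i) = none → q ∉ A.F → A.T q = SubTrans.sub Kind.at A' q' →
      MemoAtRun A0 w A' A'.q0 i M M1 (.failure j) s1 →
      A0.nu q < j →
      MemoAtRun A0 w A q i M (atRecord M1 q i (.failure (A0.nu q)))
        (.failure (A0.nu q)) (.call q i :: s1 ++ [AtRunElem.fail (A0.nu q)])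
  | subFailLow {A A' : SubNFA Sigma S} {q q' : S} {i j : ℕ}
      {M M1 : S × ℕ → Option ℕ} {s1 : List (AtRunElem S)} :
      M (q, i) = none → q ∉ A.F → A.T q = SubTrans.sub Kind.at A' q' →
      MemoAtRun A0 w A' A'.q0 i M M1 (.failure j) s1 →
      j ≤ A0.nu q →
      MemoAtRun A0 w A q i M (atRecord M1 q i (.failure j)) (.failure j)
        (.call q i :: s1 ++ [AtRunElem.fail j])

/-! ## The combined algorithm `Memo-(la,at)` -/

/-- Values of the memoization table of `Memo-(la,at)`: `Success` or `Failure(j)`. -/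
inductive LaAtVal : Type where
  | success : LaAtVal
  | failure : ℕ → LaAtVal

/-- Results of `Memo-(la,at)`: `SuccessAt(i', K)`, bare `Success`, or `Failure(j)`. -/
inductive LaAtResult (S : Type) : Type where
  | successAt : ℕ → Finset (S × ℕ) → LaAtResult S
  | success : LaAtResult S
  | failure : ℕ → LaAtResult S

def LaAtVal.toResult {S : Type} : LaAtVal → LaAtResult S
  | .success => .success
  | .failure j => .failure j

/-- `f`, converting results of `Memo-(la,at)` to results of `Match-(la,at)`
(undefined on the bare value `Success`). -/
def LaAtResult.toResult? {S : Type} : LaAtResult S → Option Result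
  | .successAt i _ => some (.successAt i)
  | .success => none
  | .failure _ => some .failure

def laAtFinal [DecidableEq S] (q : S) (i : ℕ) : LaAtResult S → LaAtResult S
  | .successAt i' K => .successAt i' (insert (q, i) K)
  | r => r

def laAtRecord [DecidableEq S] (M : S × ℕ → Option LaAtVal) (q : S) (i : ℕ) :
    LaAtResult S → (S × ℕ → Option LaAtVal)
  | .successAt _ _ => M
  | .success => fun p => if p = (q, i) then some LaAtVal.success else M p
  | .failure j => fun p => if p = (q, i) then some (LaAtVal.failure j) else M p

def laAtBatch [DecidableEq S] (M : S × ℕ → Option LaAtVal) (K : Finset (S × ℕ))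
    (v : LaAtVal) : S × ℕ → Option LaAtVal :=
  fun p => if p ∈ K then some v else M p

/-- Big-step semantics (with resulting memoization table and the number of recursive
calls made) of the combined memoized backtracking matching algorithm `Memo-(la,at)`:
`MemoLaAtRun w A0 A q i M M' r n` means the call `Memo-(la,at)^M_{A0,A,w}(q, i)`
terminates with result `r`, final memoization table `M'`, making `n` calls in total.
On a positive look-ahead transition, the sub-automaton becomes the new whole automaton
(so nesting depths of atomic grouping are reset by look-around operators). -/
inductive MemoLaAtRun [DecidableEq S] (w : List Sigma) :
    SubNFA Sigma S → SubNFA Sigma S → S → ℕ →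
    (S × ℕ → Option LaAtVal) → (S × ℕ → Option LaAtVal) → LaAtResult S → ℕ → Prop where
  | memoHit {A0 A : SubNFA Sigma S} {q : S} {i : ℕ} {M : S × ℕ → Option LaAtVal}
      {v : LaAtVal} :
      M (q, i) = some v →
      MemoLaAtRun w A0 A q i M M v.toResult 1
  | accept {A0 A : SubNFA Sigma S} {q : S} {i : ℕ} {M : S × ℕ → Option LaAtVal} :
      M (q, i) = none → q ∈ A.F →
      MemoLaAtRun w A0 A q i M M (.successAt i {(q, i)}) 1
  | eps {A0 A : SubNFA Sigma S} {q q' : S} {i : ℕ} {M M' : S × ℕ → Option LaAtVal}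
      {r : LaAtResult S} {n : ℕ} :
      M (q, i) = none → q ∉ A.F → A.T q = SubTrans.eps q' →
      MemoLaAtRun w A0 A q' i M M' r n →
      MemoLaAtRun w A0 A q i M (laAtRecord M' q i (laAtFinal q i r)) (laAtFinal q i r)
        (n + 1)
  | branchNoBT {A0 A : SubNFA Sigma S} {q q' q'' : S} {i : ℕ}
      {M M' : S × ℕ → Option LaAtVal} {r : LaAtResult S} {n : ℕ} :
      M (q, i) = none → q ∉ A.F → A.T q = SubTrans.branch q' q'' →
      MemoLaAtRun w A0 A q' i M M' r n →
      (∀ j, r = LaAtResult.failure j → j ≠ A0.nu q) →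
      MemoLaAtRun w A0 A q i M (laAtRecord M' q i (laAtFinal q i r)) (laAtFinal q i r)
        (n + 1)
  | branchBTFail {A0 A : SubNFA Sigma S} {q q' q'' : S} {i j' : ℕ}
      {M M1 M2 : S × ℕ → Option LaAtVal} {n1 n2 : ℕ} :
      M (q, i) = none → q ∉ A.F → A.T q = SubTrans.branch q' q'' →
      MemoLaAtRun w A0 A q' i M M1 (.failure (A0.nu q)) n1 →
      MemoLaAtRun w A0 A q'' i M1 M2 (.failure j') n2 →
      MemoLaAtRun w A0 A q i M
        (laAtRecord M2 q i (.failure (min (A0.nu q) j')))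
        (.failure (min (A0.nu q) j')) (n1 + n2 + 1)
  | branchBTOther {A0 A : SubNFA Sigma S} {q q' q'' : S} {i : ℕ}
      {M M1 M2 : S × ℕ → Option LaAtVal} {r : LaAtResult S} {n1 n2 : ℕ} :
      M (q, i) = none → q ∉ A.F → A.T q = SubTrans.branch q' q'' →
      MemoLaAtRun w A0 A q' i M M1 (.failure (A0.nu q)) n1 →
      MemoLaAtRun w A0 A q'' i M1 M2 r n2 →
      (∀ j, r ≠ LaAtResult.failure j) →
      MemoLaAtRun w A0 A q i M (laAtRecord M2 q i (laAtFinal q i r)) (laAtFinal q i r)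
        (n1 + n2 + 1)
  | charSucc {A0 A : SubNFA Sigma S} {q q' : S} {σ : Sigma} {i : ℕ}
      {M M' : S × ℕ → Option LaAtVal} {r : LaAtResult S} {n : ℕ} :
      M (q, i) = none → q ∉ A.F → A.T q = SubTrans.char σ q' →
      w[i]? = some σ →
      MemoLaAtRun w A0 A q' (i + 1) M M' r n →
      MemoLaAtRun w A0 A q i M (laAtRecord M' q i (laAtFinal q i r)) (laAtFinal q i r)
        (n + 1)
  | charFail {A0 A : SubNFA Sigma S} {q q' : S} {σ : Sigma} {i : ℕ}
      {M : S × ℕ → Option LaAtVal} :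
      M (q, i) = none → q ∉ A.F → A.T q = SubTrans.char σ q' →
      w[i]? ≠ some σ →
      MemoLaAtRun w A0 A q i M (laAtRecord M q i (.failure (A0.nu q)))
        (.failure (A0.nu q)) 1
  | plaSuccAt {A0 A A' : SubNFA Sigma S} {q q' : S} {i i' : ℕ} {K' : Finset (S × ℕ)}
      {M M1 M2 : S × ℕ → Option LaAtVal} {r : LaAtResult S} {n1 n2 : ℕ} :
      M (q, i) = none → q ∉ A.F → A.T q = SubTrans.sub Kind.pla A' q' →
      MemoLaAtRun w A' A' A'.q0 i M M1 (.successAt i' K') n1 →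
      MemoLaAtRun w A0 A q' i (laAtBatch M1 K' LaAtVal.success) M2 r n2 →
      MemoLaAtRun w A0 A q i M (laAtRecord M2 q i (laAtFinal q i r)) (laAtFinal q i r)
        (n1 + n2 + 1)
  | plaBare {A0 A A' : SubNFA Sigma S} {q q' : S} {i : ℕ}
      {M M1 M2 : S × ℕ → Option LaAtVal} {r : LaAtResult S} {n1 n2 : ℕ} :
      M (q, i) = none → q ∉ A.F → A.T q = SubTrans.sub Kind.pla A' q' →
      MemoLaAtRun w A' A' A'.q0 i M M1 .success n1 →
      MemoLaAtRun w A0 A q' i M1 M2 r n2 →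
      MemoLaAtRun w A0 A q i M (laAtRecord M2 q i (laAtFinal q i r)) (laAtFinal q i r)
        (n1 + n2 + 1)
  | plaFail {A0 A A' : SubNFA Sigma S} {q q' : S} {i j : ℕ}
      {M M1 : S × ℕ → Option LaAtVal} {n1 : ℕ} :
      M (q, i) = none → q ∉ A.F → A.T q = SubTrans.sub Kind.pla A' q' →
      MemoLaAtRun w A' A' A'.q0 i M M1 (.failure j) n1 →
      MemoLaAtRun w A0 A q i M (laAtRecord M1 q i (.failure (A0.nu q)))
        (.failure (A0.nu q)) (n1 + 1)
  | atSuccSucc {A0 A A' : SubNFA Sigma S} {q q' : S} {i i' i'' : ℕ}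
      {K' K'' : Finset (S × ℕ)} {M M1 M2 : S × ℕ → Option LaAtVal} {n1 n2 : ℕ} :
      M (q, i) = none → q ∉ A.F → A.T q = SubTrans.sub Kind.at A' q' →
      MemoLaAtRun w A0 A' A'.q0 i M M1 (.successAt i' K') n1 →
      MemoLaAtRun w A0 A q' i' M1 M2 (.successAt i'' K'') n2 →
      MemoLaAtRun w A0 A q i M M2
        (laAtFinal q i (.successAt i'' (K' ∪ K''))) (n1 + n2 + 1)
  | atSuccBare {A0 A A' : SubNFA Sigma S} {q q' : S} {i i' : ℕ} {K' : Finset (S × ℕ)}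
      {M M1 M2 : S × ℕ → Option LaAtVal} {n1 n2 : ℕ} :
      M (q, i) = none → q ∉ A.F → A.T q = SubTrans.sub Kind.at A' q' →
      MemoLaAtRun w A0 A' A'.q0 i M M1 (.successAt i' K') n1 →
      MemoLaAtRun w A0 A q' i' M1 M2 .success n2 →
      MemoLaAtRun w A0 A q i M
        (laAtRecord (laAtBatch M2 K' LaAtVal.success) q i .success) .success
        (n1 + n2 + 1)
  | atSuccFail {A0 A A' : SubNFA Sigma S} {q q' : S} {i i' j : ℕ} {K' : Finset (S × ℕ)}
      {M M1 M2 : S × ℕ → Option LaAtVal} {n1 n2 : ℕ} :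
      M (q, i) = none → q ∉ A.F → A.T q = SubTrans.sub Kind.at A' q' →
      MemoLaAtRun w A0 A' A'.q0 i M M1 (.successAt i' K') n1 →
      MemoLaAtRun w A0 A q' i' M1 M2 (.failure j) n2 →
      MemoLaAtRun w A0 A q i M
        (laAtRecord (laAtBatch M2 K' (LaAtVal.failure j)) q i (.failure j))
        (.failure j) (n1 + n2 + 1)
  | atBare {A0 A A' : SubNFA Sigma S} {q q' : S} {i : ℕ}
      {M M1 : S × ℕ → Option LaAtVal} {n1 : ℕ} :
      M (q, i) = none → q ∉ A.F → A.T q = SubTrans.sub Kind.at A' q' →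
      MemoLaAtRun w A0 A' A'.q0 i M M1 .success n1 →
      MemoLaAtRun w A0 A q i M (laAtRecord M1 q i .success) .success (n1 + 1)
  | atFailHigh {A0 A A' : SubNFA Sigma S} {q q' : S} {i j : ℕ}
      {M M1 : S × ℕ → Option LaAtVal} {n1 : ℕ} :
      M (q, i) = none → q ∉ A.F → A.T q = SubTrans.sub Kind.at A' q' →
      MemoLaAtRun w A0 A' A'.q0 i M M1 (.failure j) n1 →
      A0.nu q < j →
      MemoLaAtRun w A0 A q i M (laAtRecord M1 q i (.failure (A0.nu q)))
        (.failure (A0.nu q)) (n1 + 1)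
  | atFailLow {A0 A A' : SubNFA Sigma S} {q q' : S} {i j : ℕ}
      {M M1 : S × ℕ → Option LaAtVal} {n1 : ℕ} :
      M (q, i) = none → q ∉ A.F → A.T q = SubTrans.sub Kind.at A' q' →
      MemoLaAtRun w A0 A' A'.q0 i M M1 (.failure j) n1 →
      j ≤ A0.nu q →
      MemoLaAtRun w A0 A q i M (laAtRecord M1 q i (.failure j)) (.failure j) (n1 + 1)



/-! ## Proof of Theorem 6 -/

/-- Contexts: enclosing automata together with the continuation states. -/
abbrev Ctx (Sigma S : Type) := List (SubNFA Sigma S × S)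

mutual
/-- All component automata together with their contexts. -/
def SubNFA.compsC : SubNFA Sigma S → Ctx Sigma S → List (SubNFA Sigma S × Ctx Sigma S)
  | .mk Q q0 F T, ctx =>
    (.mk Q q0 F T, ctx) :: Q.flatMap (fun q => SubTrans.subCompsC (T q) (.mk Q q0 F T) ctx)

def SubTrans.subCompsC : SubTrans Sigma S → SubNFA Sigma S → Ctx Sigma S →
    List (SubNFA Sigma S × Ctx Sigma S)
  | .sub _ A' q', P, ctx => SubNFA.compsC A' ((P, q') :: ctx)
  | _, _, _ => []
end

mutual
theorem compsC_fst : ∀ (A : SubNFA Sigma S) (ctx : Ctx Sigma S),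
    (A.compsC ctx).map Prod.fst = A.compsD.map Prod.fst
  | .mk Q q0 F T, ctx => by
    simp only [SubNFA.compsC, SubNFA.compsD, List.map_cons, List.map_flatMap]
    congr 1
    congr 1
    funext q
    exact subCompsC_fst (T q) _ _
theorem subCompsC_fst : ∀ (t : SubTrans Sigma S) (P : SubNFA Sigma S) (ctx : Ctx Sigma S),
    (t.subCompsC P ctx).map Prod.fst = t.subCompsD.map Prod.fst
  | .sub k A' q', P, ctx => by
    simp only [SubTrans.subCompsC, SubTrans.subCompsD, List.map_map]
    rw [compsC_fst A' _]
    rfl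
  | .eps _, _, _ => by simp [SubTrans.subCompsC, SubTrans.subCompsD]
  | .branch _ _, _, _ => by simp [SubTrans.subCompsC, SubTrans.subCompsD]
  | .char _ _, _, _ => by simp [SubTrans.subCompsC, SubTrans.subCompsD]
end

theorem compsC_self (A : SubNFA Sigma S) (ctx : Ctx Sigma S) : (A, ctx) ∈ A.compsC ctx := by
  cases A; simp [SubNFA.compsC]

theorem compsD_self (A : SubNFA Sigma S) : (A, 0) ∈ A.compsD := by
  cases A; simp [SubNFA.compsD]

mutual
theorem compsC_step {B A' : SubNFA Sigma S} {p q' : S} {k : Kind} {c : Ctx Sigma S}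
    (hp : p ∈ B.Q) (hT : B.T p = .sub k A' q') :
    ∀ (A : SubNFA Sigma S) (ctx : Ctx Sigma S),
    (B, c) ∈ A.compsC ctx → (A', (B, q') :: c) ∈ A.compsC ctx
  | .mk Q q0 F T, ctx => by
    intro h
    simp only [SubNFA.compsC, List.mem_cons, List.mem_flatMap] at h ⊢
    right
    rcases h with h | ⟨q, hq, h⟩
    · obtain ⟨rfl, rfl⟩ := Prod.mk.inj h
      refine ⟨p, hp, ?_⟩
      simp only [SubNFA.T] at hT
      rw [hT]
      exact compsC_self _ _
    · exact ⟨q, hq, subCompsC_step hp hT (T q) _ _ h⟩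
theorem subCompsC_step {B A' : SubNFA Sigma S} {p q' : S} {k : Kind} {c : Ctx Sigma S}
    (hp : p ∈ B.Q) (hT : B.T p = .sub k A' q') :
    ∀ (t : SubTrans Sigma S) (P : SubNFA Sigma S) (ctx : Ctx Sigma S),
    (B, c) ∈ t.subCompsC P ctx → (A', (B, q') :: c) ∈ t.subCompsC P ctx
  | .sub _ A1 q1, P, ctx => by
    intro h
    simp only [SubTrans.subCompsC] at h ⊢
    exact compsC_step hp hT A1 _ h
  | .eps _, _, _ => by simp [SubTrans.subCompsC]
  | .branch _ _, _, _ => by simp [SubTrans.subCompsC]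
  | .char _ _, _, _ => by simp [SubTrans.subCompsC]
end

mutual
theorem compsD_step {B A' : SubNFA Sigma S} {p q' : S} 
    (hp : p ∈ B.Q) (hT : B.T p = .sub Kind.at A' q') :
    ∀ (A : SubNFA Sigma S) (d : ℕ),
    (B, d) ∈ A.compsD → (A', d + 1) ∈ A.compsD
  | .mk Q q0 F T, d => by
    intro h
    simp only [SubNFA.compsD, List.mem_cons, List.mem_flatMap] at h ⊢
    right
    rcases h with h | ⟨q, hq, h⟩
    · obtain ⟨rfl, rfl⟩ := Prod.mk.inj h
      refine ⟨p, hp, ?_⟩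
      simp only [SubNFA.T] at hT
      rw [hT]
      simp only [SubTrans.subCompsD, List.mem_map]
      exact ⟨(A', 0), compsD_self _, by simp⟩
    · exact ⟨q, hq, subCompsD_step hp hT (T q) _ h⟩
theorem subCompsD_step {B A' : SubNFA Sigma S} {p q' : S}
    (hp : p ∈ B.Q) (hT : B.T p = .sub Kind.at A' q') :
    ∀ (t : SubTrans Sigma S) (d : ℕ),
    (B, d) ∈ t.subCompsD → (A', d + 1) ∈ t.subCompsD
  | .sub k A1 q1, d => by
    intro h
    simp only [SubTrans.subCompsD, List.mem_map] at h ⊢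
    obtain ⟨⟨B', e⟩, h, he⟩ := h
    obtain ⟨rfl, rfl⟩ := Prod.mk.inj he
    refine ⟨_, compsD_step hp hT A1 e h, ?_⟩
    simp only [Prod.mk.injEq, true_and]
    omega
  | .eps _, _ => by simp [SubTrans.subCompsD]
  | .branch _ _, _ => by simp [SubTrans.subCompsD]
  | .char _ _, _ => by simp [SubTrans.subCompsD]
end

theorem uniq_of_nodup {β : Type} : ∀ (L : List (SubNFA Sigma S × β)),
    ((L.map Prod.fst).flatMap SubNFA.Q).Nodup →
    ∀ {x y : SubNFA Sigma S × β} {q : S}, x ∈ L → y ∈ L → q ∈ x.1.Q → q ∈ y.1.Q → x = y := by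
  intro L
  induction L with
  | nil => intro _ x y q hx; simp at hx
  | cons a L ih =>
    intro h x y q hx hy hqx hqy
    simp only [List.map_cons, List.flatMap_cons, List.nodup_append] at h
    obtain ⟨_, h2, h3⟩ := h
    have key : ∀ z ∈ L, q ∈ z.1.Q → q ∈ (L.map Prod.fst).flatMap SubNFA.Q := by
      intro z hz hq
      simp only [List.mem_flatMap, List.mem_map]
      exact ⟨z.1, ⟨z, hz, rfl⟩, hq⟩
    rcases List.mem_cons.1 hx with hx1 | hx1 <;> rcases List.mem_cons.1 hy with hy1 | hy1
    · rw [hx1, hy1]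
    · rw [hx1] at hqx
      exact absurd rfl (h3 q hqx q (key _ hy1 hqy))
    · rw [hy1] at hqy
      exact absurd rfl (h3 q hqy q (key _ hx1 hqx))
    · exact ih h2 hx1 hy1 hqx hqy

theorem sum_of_nodup [DecidableEq S] (q : S) : ∀ (L : List (SubNFA Sigma S × ℕ)),
    ((L.map Prod.fst).flatMap SubNFA.Q).Nodup →
    (q ∉ (L.map Prod.fst).flatMap SubNFA.Q →
      (L.map (fun p => if q ∈ p.1.Q then p.2 else 0)).sum = 0) ∧
    ∀ x ∈ L, q ∈ x.1.Q → (L.map (fun p => if q ∈ p.1.Q then p.2 else 0)).sum = x.2 := by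
  intro L
  induction L with
  | nil => intro _; simp
  | cons a L ih =>
    intro h
    simp only [List.map_cons, List.flatMap_cons, List.nodup_append] at h
    obtain ⟨_, h2, h3⟩ := h
    obtain ⟨i1, i2⟩ := ih h2
    simp only [List.map_cons, List.flatMap_cons, List.sum_cons]
    refine ⟨fun hn => ?_, fun x hx hq => ?_⟩
    · rw [List.mem_append, not_or] at hn
      rw [i1 hn.2, if_neg hn.1]
    · rcases List.mem_cons.1 hx with rfl | hx
      · rw [if_pos hq, i1 (fun hm => h3 q hq q hm rfl), add_zero]
      · have : q ∈ (L.map Prod.fst).flatMap SubNFA.Q := by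
          simp only [List.mem_flatMap, List.mem_map]
          exact ⟨x.1, ⟨x, hx, rfl⟩, hq⟩
        rw [if_neg (fun hm => h3 q hm q this rfl), zero_add, i2 x hx hq]

/-- `Chain A0 B ctx`: the component `B` of `A0` sits in the context `ctx`. -/
inductive Chain (A0 : SubNFA Sigma S) : SubNFA Sigma S → Ctx Sigma S → Prop where
  | root : Chain A0 A0 []
  | step {B A' : SubNFA Sigma S} {ctx : Ctx Sigma S} {p q' : S} :
      Chain A0 B ctx → p ∈ B.Q → B.T p = SubTrans.sub Kind.at A' q' →
      Chain A0 A' ((B, q') :: ctx)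

theorem Chain.memD {A0 B : SubNFA Sigma S} {ctx : Ctx Sigma S} (h : Chain A0 B ctx) :
    (B, ctx.length) ∈ A0.compsD := by
  induction h with
  | root => exact compsD_self _
  | step _ hp hT ih => exact compsD_step hp hT _ _ ih

theorem Chain.memC {A0 B : SubNFA Sigma S} {ctx : Ctx Sigma S} (h : Chain A0 B ctx) :
    (B, ctx) ∈ A0.compsC [] := by
  induction h with
  | root => exact compsC_self _ _
  | step _ hp hT ih => exact compsC_step hp hT _ _ ih

theorem Chain.mem {A0 B : SubNFA Sigma S} {ctx : Ctx Sigma S} (h : Chain A0 B ctx) :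
    B ∈ A0.comps := List.mem_map.2 ⟨_, h.memD, rfl⟩

theorem Chain.uniq {A0 B C : SubNFA Sigma S} {ctx ctx' : Ctx Sigma S} {q : S} (hWF : A0.WF)
    (h : Chain A0 B ctx) (h' : Chain A0 C ctx') (hq : q ∈ B.Q) (hq' : q ∈ C.Q) :
    B = C ∧ ctx = ctx' := by
  have hn := hWF.2
  unfold SubNFA.allStates SubNFA.comps at hn
  rw [← compsC_fst A0 []] at hn
  exact Prod.mk.inj (uniq_of_nodup _ hn h.memC h'.memC hq hq')

theorem Chain.nu [DecidableEq S] {A0 B : SubNFA Sigma S} {ctx : Ctx Sigma S} {q : S}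
    (hWF : A0.WF) (h : Chain A0 B ctx) (hq : q ∈ B.Q) : A0.nu q = ctx.length :=
  (sum_of_nodup q _ hWF.2).2 _ h.memD hq

/-- Result-only matching. -/
def Mt (w : List Sigma) (A : SubNFA Sigma S) (q : S) (i : ℕ) (r : Result) : Prop :=
  ∃ s, LAMatchRun w A q i r s

theorem LAMatchRun.det {w : List Sigma} {A : SubNFA Sigma S} {q : S} {i : ℕ} {r r' : Result}
    {s s' : List (LaRunElem S)} (h : LAMatchRun w A q i r s) (h' : LAMatchRun w A q i r' s') :
    r = r' := by
  induction h generalizing r' s' with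
  | accept => cases h' <;> simp_all
  | eps hF hT _ ih => cases h' <;> simp_all <;> (subst_vars; solve_by_elim)
  | branchSucc hF hT _ ih =>
    cases h' with
    | branchSucc _ hT' h1 => rw [hT] at hT'; cases hT'; exact ih h1
    | branchFail _ hT' h1 => rw [hT] at hT'; cases hT'; cases ih h1
    | _ => simp_all
  | branchFail hF hT _ _ ih ih2 =>
    cases h' with
    | branchSucc _ hT' h1 => rw [hT] at hT'; cases hT'; cases ih h1
    | branchFail _ hT' h1 h2 => rw [hT] at hT'; cases hT'; exact ih2 h2
    | _ => simp_all
  | charSucc hF hT hw _ ih =>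
    cases h' with
    | charSucc _ hT' _ h1 => rw [hT] at hT'; cases hT'; exact ih h1
    | _ => simp_all
  | charFail => cases h' <;> simp_all
  | plaSucc hF hT _ _ ih ih2 =>
    cases h' with
    | plaSucc _ hT' h1 h2 => rw [hT] at hT'; cases hT'; exact ih2 h2
    | plaFail _ hT' h1 => rw [hT] at hT'; cases hT'; cases ih h1
    | _ => simp_all
  | plaFail hF hT _ ih =>
    cases h' with
    | plaSucc _ hT' h1 h2 => rw [hT] at hT'; cases hT'; cases ih h1
    | plaFail _ hT' h1 => rfl
    | _ => simp_all
  | atSucc hF hT _ _ ih ih2 =>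
    cases h' with
    | atSucc _ hT' h1 h2 => rw [hT] at hT'; cases hT'; cases ih h1; exact ih2 h2
    | atFail _ hT' h1 => rw [hT] at hT'; cases hT'; cases ih h1
    | _ => simp_all
  | atFail hF hT _ ih =>
    cases h' with
    | atSucc _ hT' h1 h2 => rw [hT] at hT'; cases hT'; cases ih h1
    | atFail _ hT' h1 => rfl
    | _ => simp_all

theorem Mt.det {w : List Sigma} {A : SubNFA Sigma S} {q : S} {i : ℕ} {r r' : Result}
    (h : Mt w A q i r) (h' : Mt w A q i r') : r = r' := by
  obtain ⟨_, h⟩ := h; obtain ⟨_, h'⟩ := h'; exact h.det h'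

/-- Continuing in context `ctx` from position `i` fails at depth `j`. -/
def FailK (w : List Sigma) : Ctx Sigma S → ℕ → ℕ → Prop
  | [], _, _ => False
  | (P, q') :: ctx, i, j => (j = ctx.length ∧ Mt w P q' i .failure) ∨
      ∃ i', Mt w P q' i (.successAt i') ∧ FailK w ctx i' j

/-- Matching from `(q, i)` in the automaton `B` with context `ctx` fails at depth `j`. -/
def FailS (w : List Sigma) (B : SubNFA Sigma S) (ctx : Ctx Sigma S) (q : S) (i j : ℕ) : Prop :=
  FailK w ((B, q) :: ctx) i j

theorem FailK.lt {w : List Sigma} : ∀ {ctx : Ctx Sigma S} {i j : ℕ}, FailK w ctx i j →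
    j < ctx.length
  | [], _, _, h => h.elim
  | (P, q') :: ctx, i, j, h => by
    rcases h with ⟨rfl, _⟩ | ⟨i', _, h⟩
    · simp
    · have := FailK.lt h
      simp only [List.length_cons]; omega

theorem FailS.le {w : List Sigma} {B : SubNFA Sigma S} {ctx : Ctx Sigma S} {q : S} {i j : ℕ}
    (h : FailS w B ctx q i j) : j ≤ ctx.length := by
  have := FailK.lt h
  simp only [List.length_cons] at this; omega

theorem FailS.top {w : List Sigma} {B : SubNFA Sigma S} {ctx : Ctx Sigma S} {q : S} {i : ℕ}
    (h : FailS w B ctx q i ctx.length) : Mt w B q i .failure := by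
  rcases h with ⟨_, h⟩ | ⟨i', _, h⟩
  · exact h
  · exact absurd (FailK.lt h) (lt_irrefl _)

/-- If the result from `(p, i')` determines the one from `(q, i)`, failures transfer. -/
theorem FailS.mono {w : List Sigma} {B : SubNFA Sigma S} {ctx : Ctx Sigma S} {q p : S}
    {i i' j : ℕ} (hm : ∀ r, Mt w B p i' r → Mt w B q i r) (h : FailS w B ctx p i' j) :
    FailS w B ctx q i j := by
  rcases h with ⟨h1, h⟩ | ⟨i', h1, h⟩
  · exact Or.inl ⟨h1, hm _ h⟩
  · exact Or.inr ⟨i', hm _ h1, h⟩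

/-- The invariant of memoization tables. -/
def TabOK (A0 : SubNFA Sigma S) (w : List Sigma) (M : S × ℕ → Option ℕ) : Prop :=
  ∀ B ctx q i j, Chain A0 B ctx → q ∈ B.Q → M (q, i) = some j → FailS w B ctx q i j

/-- The invariant of delayed keys. -/
def KeyOK (A0 : SubNFA Sigma S) (w : List Sigma) (ctx : Ctx Sigma S) (i' : ℕ)
    (k : S × ℕ) : Prop :=
  ∀ C ctxC, Chain A0 C ctxC → k.1 ∈ C.Q → ∀ j, FailK w ctx i' j → FailS w C ctxC k.1 k.2 j

/-- Soundness of results. -/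
def ResOK (A0 : SubNFA Sigma S) (w : List Sigma) (B : SubNFA Sigma S) (ctx : Ctx Sigma S)
    (q : S) (i : ℕ) : AtResult S → Prop
  | .successAt i' K => Mt w B q i (.successAt i') ∧ ∀ k ∈ K, KeyOK A0 w ctx i' k
  | .failure j => FailS w B ctx q i j

theorem keyOK_self {A0 : SubNFA Sigma S} {w : List Sigma} {B : SubNFA Sigma S}
    {ctx : Ctx Sigma S} {q : S} {i i' : ℕ} (hWF : A0.WF) (hc : Chain A0 B ctx) (hq : q ∈ B.Q)
    (h : Mt w B q i (.successAt i')) : KeyOK A0 w ctx i' (q, i) := by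
  intro C ctxC hC hqC j hj
  obtain ⟨rfl, rfl⟩ := hc.uniq hWF hC hq hqC
  exact Or.inr ⟨i', h, hj⟩

theorem resOK_final [DecidableEq S] {A0 : SubNFA Sigma S} {w : List Sigma} {B : SubNFA Sigma S}
    {ctx : Ctx Sigma S} {q p : S} {i i1 : ℕ} {r : AtResult S} (hWF : A0.WF)
    (hc : Chain A0 B ctx) (hq : q ∈ B.Q)
    (hm : ∀ r, Mt w B p i1 r → Mt w B q i r) (h : ResOK A0 w B ctx p i1 r) :
    ResOK A0 w B ctx q i (atFinal q i r) := by
  cases r with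
  | failure j => exact FailS.mono hm h
  | successAt i' K =>
    refine ⟨hm _ h.1, fun k hk => ?_⟩
    rcases Finset.mem_insert.1 hk with rfl | hk
    · exact keyOK_self hWF hc hq (hm _ h.1)
    · exact h.2 k hk

theorem tabOK_set [DecidableEq S] {A0 : SubNFA Sigma S} {w : List Sigma} {B : SubNFA Sigma S}
    {ctx : Ctx Sigma S} {q : S} {i : ℕ} {r : AtResult S} {M : S × ℕ → Option ℕ} (hWF : A0.WF)
    (hc : Chain A0 B ctx) (hq : q ∈ B.Q) (hM : TabOK A0 w M)
    (h : ∀ j, r = .failure j → FailS w B ctx q i j) :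
    TabOK A0 w (atRecord M q i r) := by
  cases r with
  | successAt => exact hM
  | failure j =>
    intro C ctxC p i' j' hC hp hj
    simp only [atRecord] at hj
    split_ifs at hj with he
    · obtain ⟨rfl, rfl⟩ := Prod.mk.inj he
      obtain rfl := Option.some.inj hj
      obtain ⟨rfl, rfl⟩ := hc.uniq hWF hC hq hp
      exact h _ rfl
    · exact hM _ _ _ _ _ hC hp hj

theorem resOK_tab [DecidableEq S] {A0 : SubNFA Sigma S} {w : List Sigma} {B : SubNFA Sigma S}
    {ctx : Ctx Sigma S} {q p : S} {i i1 : ℕ} {r : AtResult S} {M : S × ℕ → Option ℕ}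
    (hWF : A0.WF) (hc : Chain A0 B ctx) (hq : q ∈ B.Q) (hM : TabOK A0 w M)
    (hm : ∀ r, Mt w B p i1 r → Mt w B q i r) (h : ResOK A0 w B ctx p i1 r) :
    TabOK A0 w (atRecord M q i r) := by
  refine tabOK_set hWF hc hq hM ?_
  rintro j rfl
  exact FailS.mono hm h

theorem tabOK_batch [DecidableEq S] {A0 : SubNFA Sigma S} {w : List Sigma}
    {ctx : Ctx Sigma S} {i' j : ℕ} {K : Finset (S × ℕ)} {M : S × ℕ → Option ℕ}
    (hM : TabOK A0 w M) (hK : ∀ k ∈ K, KeyOK A0 w ctx i' k) (h : FailK w ctx i' j) :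
    TabOK A0 w (atBatch M K j) := by
  intro C ctxC p i1 j' hC hp hj
  simp only [atBatch] at hj
  split_ifs at hj with he
  · obtain rfl := Option.some.inj hj
    exact hK _ he _ _ hC hp _ h
  · exact hM _ _ _ _ _ hC hp hj

section Local
variable {A0 B : SubNFA Sigma S} {ctx : Ctx Sigma S} {q : S}

theorem loc_eps (hWF : A0.WF) (hc : Chain A0 B ctx) (hq : q ∈ B.Q) (hF : q ∉ B.F) {q' : S}
    (hT : B.T q = .eps q') : q' ∈ B.Q := by
  have := (hWF.1 _ hc.mem).2.2 q hq hF; rw [hT] at this; exact this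

theorem loc_branch (hWF : A0.WF) (hc : Chain A0 B ctx) (hq : q ∈ B.Q) (hF : q ∉ B.F)
    {q' q'' : S} (hT : B.T q = .branch q' q'') : q' ∈ B.Q ∧ q'' ∈ B.Q := by
  have := (hWF.1 _ hc.mem).2.2 q hq hF; rw [hT] at this; exact this

theorem loc_char (hWF : A0.WF) (hc : Chain A0 B ctx) (hq : q ∈ B.Q) (hF : q ∉ B.F) {q' : S}
    {σ : Sigma} (hT : B.T q = .char σ q') : q' ∈ B.Q := by
  have := (hWF.1 _ hc.mem).2.2 q hq hF; rw [hT] at this; exact this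

theorem loc_sub (hWF : A0.WF) (hc : Chain A0 B ctx) (hq : q ∈ B.Q) (hF : q ∉ B.F) {q' : S}
    {k : Kind} {A' : SubNFA Sigma S} (hT : B.T q = .sub k A' q') : q' ∈ B.Q := by
  have := (hWF.1 _ hc.mem).2.2 q hq hF; rw [hT] at this; exact this

theorem loc_q0 (hWF : A0.WF) (hc : Chain A0 B ctx) : B.q0 ∈ B.Q := (hWF.1 _ hc.mem).1

theorem loc_kind [DecidableEq S] (hAt : A0.IsAtNFA) (hc : Chain A0 B ctx) (hq : q ∈ B.Q)
    (hF : q ∉ B.F) {q' : S} {k : Kind} {A' : SubNFA Sigma S} (hT : B.T q = .sub k A' q') :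
    k = Kind.at := by
  apply hAt
  unfold SubNFA.kinds
  simp only [List.mem_flatMap, List.mem_filterMap, List.mem_filter, decide_eq_true_eq]
  exact ⟨B, hc.mem, q, ⟨hq, hF⟩, by rw [hT]⟩

end Local

theorem memoAt_sound [DecidableEq S] {A0 : SubNFA Sigma S} {w : List Sigma} (hWF : A0.WF)
    {B : SubNFA Sigma S} {q : S} {i : ℕ} {M M' : S × ℕ → Option ℕ} {r : AtResult S}
    {s : List (AtRunElem S)} (h : MemoAtRun A0 w B q i M M' r s) :
    ∀ ctx, Chain A0 B ctx → q ∈ B.Q → TabOK A0 w M →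
      TabOK A0 w M' ∧ ResOK A0 w B ctx q i r := by
  induction h with
  | memoHit h => exact fun ctx hc hq hM => ⟨hM, hM _ _ _ _ _ hc hq h⟩
  | accept _ hF =>
    intro ctx hc hq hM
    refine ⟨hM, ⟨_, .accept hF⟩, fun k hk => ?_⟩
    obtain rfl := Finset.mem_singleton.1 hk
    exact keyOK_self hWF hc hq ⟨_, .accept hF⟩
  | @eps A q q' i M M' r s _ hF hT _ ih =>
    intro ctx hc hq hM
    obtain ⟨h1, h2⟩ := ih ctx hc (loc_eps hWF hc hq hF hT) hM
    have hm := fun r (hr : Mt w A q' i r) =>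
      (⟨_, LAMatchRun.eps hF hT hr.choose_spec⟩ : Mt w A q i r)
    exact ⟨resOK_tab hWF hc hq h1 hm h2, resOK_final hWF hc hq hm h2⟩
  | @branchNoBT A q q' q'' i M M' r s _ hF hT _ hne ih =>
    intro ctx hc hq hM
    obtain ⟨h1, h2⟩ := ih ctx hc (loc_branch hWF hc hq hF hT).1 hM
    rw [hc.nu hWF hq] at hne
    have hs := fun i' (hr : Mt w A q' i (.successAt i')) =>
      (⟨_, LAMatchRun.branchSucc hF hT hr.choose_spec⟩ : Mt w A q i (.successAt i'))
    cases r with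
    | successAt i' K =>
      refine ⟨h1, hs _ h2.1, fun k hk => ?_⟩
      rcases Finset.mem_insert.1 hk with rfl | hk
      · exact keyOK_self hWF hc hq (hs _ h2.1)
      · exact h2.2 k hk
    | failure j =>
      have hf : FailS w A ctx q i j := by
        rcases h2 with ⟨hj, _⟩ | ⟨i', h2, h3⟩
        · exact absurd hj (hne j rfl)
        · exact Or.inr ⟨i', hs _ h2, h3⟩
      refine ⟨tabOK_set hWF hc hq h1 ?_, hf⟩
      rintro j' h; cases h; exact hf
  | @branchBTSucc A q q' q'' i i'' K M M1 M2 s1 s2 _ hF hT _ _ ih1 ih2 =>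
    intro ctx hc hq hM
    obtain ⟨hq1, hq2⟩ := loc_branch hWF hc hq hF hT
    obtain ⟨h1, h2⟩ := ih1 ctx hc hq1 hM
    obtain ⟨h3, h4⟩ := ih2 ctx hc hq2 h1
    rw [hc.nu hWF hq] at h2
    have hf := FailS.top h2
    have hm := fun r (hr : Mt w A q'' i r) =>
      (⟨_, LAMatchRun.branchFail hF hT hf.choose_spec hr.choose_spec⟩ : Mt w A q i r)
    exact ⟨h3, resOK_final hWF hc hq hm h4⟩
  | @branchBTFail A q q' q'' i j' M M1 M2 s1 s2 _ hF hT _ _ ih1 ih2 =>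
    intro ctx hc hq hM
    obtain ⟨hq1, hq2⟩ := loc_branch hWF hc hq hF hT
    obtain ⟨h1, h2⟩ := ih1 ctx hc hq1 hM
    obtain ⟨h3, h4⟩ := ih2 ctx hc hq2 h1
    rw [hc.nu hWF hq] at h2 ⊢
    have hf := FailS.top h2
    have hm := fun r (hr : Mt w A q'' i r) =>
      (⟨_, LAMatchRun.branchFail hF hT hf.choose_spec hr.choose_spec⟩ : Mt w A q i r)
    have hle : j' ≤ ctx.length := FailS.le h4
    rw [min_eq_right hle]
    exact ⟨resOK_tab hWF hc hq h3 hm h4, FailS.mono hm h4⟩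
  | charSucc _ hF hT hw _ ih =>
    intro ctx hc hq hM
    obtain ⟨h1, h2⟩ := ih ctx hc (loc_char hWF hc hq hF hT) hM
    have hm := fun r (hr : Mt w _ _ _ r) =>
      (⟨_, LAMatchRun.charSucc hF hT hw hr.choose_spec⟩ : Mt w _ _ _ r)
    exact ⟨resOK_tab hWF hc hq h1 hm h2, resOK_final hWF hc hq hm h2⟩
  | @charFail A q q' σ i M _ hF hT hw =>
    intro ctx hc hq hM
    rw [hc.nu hWF hq]
    have hf : FailS w A ctx q i ctx.length :=
      Or.inl ⟨rfl, _, LAMatchRun.charFail hF hT hw⟩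
    refine ⟨tabOK_set hWF hc hq hM ?_, hf⟩
    rintro j' h; cases h; exact hf
  | @subSuccSucc A A' q q' i i' i'' K' K'' M M1 M2 s1 s2 _ hF hT _ _ ih1 ih2 =>
    intro ctx hc hq hM
    have hc' := hc.step hq hT
    obtain ⟨h1, h2⟩ := ih1 _ hc' (loc_q0 hWF hc') hM
    obtain ⟨h3, h4⟩ := ih2 ctx hc (loc_sub hWF hc hq hF hT) h1
    have hs : Mt w A q i (.successAt i'') :=
      ⟨_, LAMatchRun.atSucc hF hT h2.1.choose_spec h4.1.choose_spec⟩
    refine ⟨h3, hs, fun k hk => ?_⟩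
    rcases Finset.mem_insert.1 hk with rfl | hk
    · exact keyOK_self hWF hc hq hs
    · rcases Finset.mem_union.1 hk with hk | hk
      · intro C ctxC hC hkC j hj
        exact h2.2 k hk C ctxC hC hkC j (Or.inr ⟨i'', h4.1, hj⟩)
      · exact h4.2 k hk
  | @subSuccFail A A' q q' i i' j K' M M1 M2 s1 s2 _ hF hT _ _ ih1 ih2 =>
    intro ctx hc hq hM
    have hc' := hc.step hq hT
    obtain ⟨h1, h2⟩ := ih1 _ hc' (loc_q0 hWF hc') hM
    obtain ⟨h3, h4⟩ := ih2 ctx hc (loc_sub hWF hc hq hF hT) h1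
    have hm := fun r (hr : Mt w A q' i' r) =>
      (⟨_, LAMatchRun.atSucc hF hT h2.1.choose_spec hr.choose_spec⟩ : Mt w A q i r)
    exact ⟨resOK_tab hWF hc hq (tabOK_batch h3 h2.2 h4) hm h4, FailS.mono hm h4⟩
  | @subFailHigh A A' q q' i j M M1 s1 _ hF hT _ hlt ih1 =>
    intro ctx hc hq hM
    have hc' := hc.step hq hT
    obtain ⟨h1, h2⟩ := ih1 _ hc' (loc_q0 hWF hc') hM
    rw [hc.nu hWF hq] at hlt ⊢
    have hle : j ≤ _ := FailS.le h2
    have hj : j = ((A, q') :: ctx).length := by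
      simp only [List.length_cons] at hle ⊢; omega
    subst hj
    have h3 := FailS.top h2
    have hf : FailS w A ctx q i ctx.length :=
      Or.inl ⟨rfl, _, LAMatchRun.atFail hF hT h3.choose_spec⟩
    refine ⟨tabOK_set hWF hc hq h1 ?_, hf⟩
    rintro j' h; cases h; exact hf
  | @subFailLow A A' q q' i j M M1 s1 _ hF hT _ hle ih1 =>
    intro ctx hc hq hM
    have hc' := hc.step hq hT
    obtain ⟨h1, h2⟩ := ih1 _ hc' (loc_q0 hWF hc') hM
    rw [hc.nu hWF hq] at hle
    have hf : FailS w A ctx q i j := by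
      rcases h2 with ⟨hj, _⟩ | ⟨i', h2, h3⟩
      · simp only [List.length_cons] at hj; omega
      · exact FailS.mono (fun r hr =>
          ⟨_, LAMatchRun.atSucc hF hT h2.choose_spec hr.choose_spec⟩) h3
    refine ⟨tabOK_set hWF hc hq h1 ?_, hf⟩
    rintro j' h; cases h; exact hf

theorem memoAt_complete [DecidableEq S] {A0 : SubNFA Sigma S} {w : List Sigma} (hWF : A0.WF)
    (hAt : A0.IsAtNFA) {B : SubNFA Sigma S} {q : S} {i : ℕ} {r : Result}
    {s : List (LaRunElem S)} (h : LAMatchRun w B q i r s) :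
    ∀ ctx M, Chain A0 B ctx → q ∈ B.Q → TabOK A0 w M →
      ∃ M' ra s', MemoAtRun A0 w B q i M M' ra s' := by
  have hsub : ∀ {A A' : SubNFA Sigma S} {q q' : S} {i j : ℕ} {M M1 : S × ℕ → Option ℕ}
      {s1 : List (AtRunElem S)}, M (q, i) = none → q ∉ A.F →
      A.T q = SubTrans.sub Kind.at A' q' →
      MemoAtRun A0 w A' A'.q0 i M M1 (.failure j) s1 →
      ∃ M' ra s', MemoAtRun A0 w A q i M M' ra s' := by
    intro A A' q q' i j M M1 s1 h1 h2 h3 h4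
    rcases lt_or_ge (A0.nu q) j with hj | hj
    · exact ⟨_, _, _, .subFailHigh h1 h2 h3 h4 hj⟩
    · exact ⟨_, _, _, .subFailLow h1 h2 h3 h4 hj⟩
  induction h with
  | @accept A q i hF =>
    intro ctx M hc hq hM
    cases hMq : M (q, i) with
    | some j => exact ⟨_, _, _, .memoHit hMq⟩
    | none => exact ⟨_, _, _, .accept hMq hF⟩
  | @eps A q q' i r s hF hT _ ih =>
    intro ctx M hc hq hM
    cases hMq : M (q, i) with
    | some j => exact ⟨_, _, _, .memoHit hMq⟩
    | none =>
      obtain ⟨_, _, _, h⟩ := ih ctx M hc (loc_eps hWF hc hq hF hT) hM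
      exact ⟨_, _, _, .eps hMq hF hT h⟩
  | @branchSucc A q q' q'' i i' s hF hT hr ih =>
    intro ctx M hc hq hM
    cases hMq : M (q, i) with
    | some j => exact ⟨_, _, _, .memoHit hMq⟩
    | none =>
      have hq1 := (loc_branch hWF hc hq hF hT).1
      obtain ⟨_, ra, _, h⟩ := ih ctx M hc hq1 hM
      refine ⟨_, _, _, .branchNoBT hMq hF hT h ?_⟩
      rintro j rfl rfl
      have h2 := (memoAt_sound hWF h ctx hc hq1 hM).2
      rw [hc.nu hWF hq] at h2
      cases (FailS.top h2).det ⟨_, hr⟩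
  | @branchFail A q q' q'' i r s s' hF hT hr _ ih ih2 =>
    intro ctx M hc hq hM
    cases hMq : M (q, i) with
    | some j => exact ⟨_, _, _, .memoHit hMq⟩
    | none =>
      obtain ⟨hq1, hq2⟩ := loc_branch hWF hc hq hF hT
      obtain ⟨M1, ra, _, h⟩ := ih ctx M hc hq1 hM
      by_cases hra : ∀ j, ra = AtResult.failure j → j ≠ A0.nu q
      · exact ⟨_, _, _, .branchNoBT hMq hF hT h hra⟩
      · push Not at hra
        obtain ⟨j, rfl, rfl⟩ := hra
        obtain ⟨M2, ra2, _, h2⟩ := ih2 ctx M1 hc hq2 (memoAt_sound hWF h ctx hc hq1 hM).1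
        cases ra2 with
        | successAt i' K => exact ⟨_, _, _, .branchBTSucc hMq hF hT h h2⟩
        | failure j => exact ⟨_, _, _, .branchBTFail hMq hF hT h h2⟩
  | @charSucc A q q' σ i r s hF hT hw _ ih =>
    intro ctx M hc hq hM
    cases hMq : M (q, i) with
    | some j => exact ⟨_, _, _, .memoHit hMq⟩
    | none =>
      obtain ⟨_, _, _, h⟩ := ih ctx M hc (loc_char hWF hc hq hF hT) hM
      exact ⟨_, _, _, .charSucc hMq hF hT hw h⟩
  | @charFail A q q' σ i hF hT hw =>
    intro ctx M hc hq hM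
    cases hMq : M (q, i) with
    | some j => exact ⟨_, _, _, .memoHit hMq⟩
    | none => exact ⟨_, _, _, .charFail hMq hF hT hw⟩
  | plaSucc hF hT =>
    intro ctx M hc hq hM
    cases loc_kind hAt hc hq hF hT
  | plaFail hF hT =>
    intro ctx M hc hq hM
    cases loc_kind hAt hc hq hF hT
  | @atSucc A A' q q' i i' r s1 s2 hF hT hr _ ih ih2 =>
    intro ctx M hc hq hM
    cases hMq : M (q, i) with
    | some j => exact ⟨_, _, _, .memoHit hMq⟩
    | none =>
      have hc' := hc.step hq hT
      obtain ⟨M1, ra, _, h⟩ := ih _ M hc' (loc_q0 hWF hc') hM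
      obtain ⟨h1, h2⟩ := memoAt_sound hWF h _ hc' (loc_q0 hWF hc') hM
      cases ra with
      | failure j => exact hsub hMq hF hT h
      | successAt i1 K =>
        cases h2.1.det ⟨_, hr⟩
        obtain ⟨M2, ra2, _, h3⟩ := ih2 ctx M1 hc (loc_sub hWF hc hq hF hT) h1
        cases ra2 with
        | successAt i' K => exact ⟨_, _, _, .subSuccSucc hMq hF hT h h3⟩
        | failure j => exact ⟨_, _, _, .subSuccFail hMq hF hT h h3⟩
  | @atFail A A' q q' i s1 hF hT hr ih =>
    intro ctx M hc hq hM
    cases hMq : M (q, i) with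
    | some j => exact ⟨_, _, _, .memoHit hMq⟩
    | none =>
      have hc' := hc.step hq hT
      obtain ⟨M1, ra, _, h⟩ := ih _ M hc' (loc_q0 hWF hc') hM
      obtain ⟨h1, h2⟩ := memoAt_sound hWF h _ hc' (loc_q0 hWF hc') hM
      cases ra with
      | failure j => exact hsub hMq hF hT h
      | successAt i1 K => cases h2.1.det ⟨_, hr⟩

theorem memoAt_sound_root [DecidableEq S] {A : SubNFA Sigma S} {w : List Sigma} (hWF : A.WF)
    {i : ℕ} {M' : S × ℕ → Option ℕ} {ra : AtResult S} {s : List (AtRunElem S)}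
    (h : MemoAtRun A w A A.q0 i (fun _ => none) M' ra s) : Mt w A A.q0 i ra.toResult := by
  have h2 := (memoAt_sound hWF h [] .root (loc_q0 hWF .root)
    (fun _ _ _ _ _ _ _ h => by cases h)).2
  cases ra with
  | successAt i' K => exact h2.1
  | failure j =>
    rcases h2 with ⟨_, h⟩ | ⟨_, _, h⟩
    · exact h
    · exact h.elim

/-- **Theorem 6** (correctness of `Memo-at`): for every at-NFA `A`, every input string
`w`, and every position `i ∈ {0, …, |w|}`,
`Match-(la,at)_{A,w}(q0, i) = f(Memo-at^{M0}_{A,A,w}(q0, i))`, where `f` converts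
results of `Memo-at` to results of `Match-(la,at)` by `f(Failure(j)) = Failure` and
`f(SuccessAt(i', K)) = SuccessAt(i')`. -/
theorem memoAt_correct {Sigma S : Type} [DecidableEq S]
    (A : SubNFA Sigma S) (hWF : A.WF) (hAt : A.IsAtNFA) (hLoop : A.NoEpsLoops)
    (w : List Sigma) (i : ℕ) (hi : i ≤ w.length) :
    ∀ r : Result,
      (∃ s, LAMatchRun w A A.q0 i r s) ↔
        (∃ (M' : S × ℕ → Option ℕ) (ra : AtResult S) (s : List (AtRunElem S)),
          MemoAtRun A w A A.q0 i (fun _ => none) M' ra s ∧ ra.toResult = r) := by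
  intro r
  constructor
  · rintro ⟨s, h⟩
    obtain ⟨M', ra, s', h'⟩ := memoAt_complete hWF hAt h [] (fun _ => none) .root
      (loc_q0 hWF .root) (fun _ _ _ _ _ _ _ h => by cases h)
    exact ⟨M', ra, s', h', (memoAt_sound_root hWF h').det ⟨s, h⟩⟩
  · rintro ⟨M', ra, s, h, rfl⟩
    exact memoAt_sound_root hWF h

end RegexMemo
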